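/- There is an absolute constant α₀ ∈ (0,1) such that the following holds. Let k ≥ 1 be an integer and let S ⊆ [n]^d with |S| ≤ 2k. Let α ∈ (0, α₀), let F ≥ 2d, and let B = b^d ≥ (2π)^{4F·d} · k/α^d with b a power of 2 dividing n. If Σ is uniform on M_{d×d} and q is uniform on [n]^d, independently, and H = (π_{Σ,q}, B, F), then every fixed i ∈ [n]^d is isolated under H with respect to S at parameter α with probability at least 1 − √α/2. -/

import Mathlib

/- STATEMENT 3: There is an absolute constant α₀ ∈ (0,1) such that: for k ≥ 1, S ⊆ [n]^d with
   |S| ≤ 2k, α ∈ (0,α₀), F ≥ 2d, B = b^d ≥ (2π)^{4Fd}·k/α^d (b a power of 2 dividing n),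
   if Σ is uniform on M_{d×d} and q uniform on [n]^d (independently), then every fixed i ∈ [n]^d
   is isolated under H = (π_{Σ,q}, B, F) w.r.t. S at parameter α with probability ≥ 1 − √α/2. -/

open scoped BigOperators Classical
open Finset

/-- circular distance to 0 on ℤ/nℤ -/
def circAbs (n : ℕ) (t : ZMod n) : ℕ := min t.val (n - t.val)

/-- ℓ∞ norm on (ℤ/nℤ)^d w.r.t. circular distance -/
def linf {n d : ℕ} (v : Fin d → ZMod n) : ℕ := Finset.univ.sup (fun s => circAbs n (v s))

/-- the pseudorandom spectrum permutation π_{Σ,q}(i) = Σ(i−q) -/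
def fperm {n d : ℕ} (M : Matrix (Fin d) (Fin d) (ZMod n)) (q : Fin d → ZMod n)
    (i : Fin d → ZMod n) : Fin d → ZMod n := M.mulVec (i - q)

/-- the point (n/b)·h(i) ∈ [n]^d of the bucket containing v: the bucket h(i) is chosen so that
    ‖v − (n/b)·h(i)‖_∞ ≤ n/b; here nb = n/b. -/
def bucketPt {n d : ℕ} (nb : ℕ) (v : Fin d → ZMod n) : Fin d → ZMod n :=
  fun s => ((nb * ((v s).val / nb) : ℕ) : ZMod n)

/-- ℓ∞ ball of (real) radius r around c in [n]^d -/
noncomputable def ballInf {n d : ℕ} [NeZero n] (c : Fin d → ZMod n) (r : ℝ) : Finset (Fin d → ZMod n) :=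
  Finset.univ.filter (fun y => (linf (c - y) : ℝ) ≤ r)

/-- i is isolated under the hashing H = (π_{Σ,q}, b^d, F) with respect to S at parameter α:
    for every scale t ≥ 0,
    |π(S∖{i}) ∩ B^∞_{(n/b)h(i)}((n/b)·2^t)| ≤ (2π)^{−Fd}·α^{d/2}·2^{(t+1)d}·2^t. -/
noncomputable def isolatedUnder {n d : ℕ} [NeZero n] (b F : ℕ) (α : ℝ)
    (S : Finset (Fin d → ZMod n)) (M : Matrix (Fin d) (Fin d) (ZMod n))
    (q : Fin d → ZMod n) (i : Fin d → ZMod n) : Prop :=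
  ∀ t : ℕ,
    ((((S.erase i).image (fun j => fperm M q j)) ∩
        ballInf (bucketPt (n / b) (fperm M q i)) (((n : ℝ) / b) * 2 ^ t)).card : ℝ)
      ≤ ((2 * Real.pi) ^ (F * d) : ℝ)⁻¹ * α ^ ((d : ℝ) / 2) * 2 ^ ((t + 1) * d) * 2 ^ t

/-!
For `j ≠ i` in `S` write `i - j = p^s • u` with some coordinate of `u` a unit, where `n` is a power
of the prime `p` (here `p = 2`). Invertible matrices act transitively on the vectors having a unit
coordinate, so `Σu` is uniform on them, and they make up at least half of `[n]^d`. Hence `Σ(i - j)`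
lands in the box of radius `R` with probability at most `2(3R/n)^d`: if `R < p^s` it never does,
since nonzero multiples of `p^s` have circular norm at least `p^s`, and if `p^s ≤ R` there are at
most `(3R)^d` vectors `v` with `‖p^s • v‖_∞ ≤ R`.

A point `π(j)` counted at scale `t` satisfies `‖Σ(i - j)‖_∞ ≤ (n/b)·2^{t+1}` by the triangle
inequality through the bucket of `i`. The expected number of such points is thus at most
`4k(6·2^t/b)^d`, so Markov's inequality makes scale `t` fail with probability at most
`(√α/4)·2^{-t}`, and these bounds sum to `√α/2`.
-/

open Matrix

section Counting

variable {α : Type*}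

lemma card_filter_lt_nsmul_le_sum {N : Type*} [AddCommMonoid N] [PartialOrder N]
    [IsOrderedAddMonoid N] (s : Finset α) (f : α → N) (hf : ∀ x ∈ s, 0 ≤ f x) (τ : N) :
    #{x ∈ s | τ < f x} • τ ≤ ∑ x ∈ s, f x :=
  calc #{x ∈ s | τ < f x} • τ ≤ ∑ x ∈ s with τ < f x, f x :=
        card_nsmul_le_sum _ _ _ fun _ hx => (mem_filter.1 hx).2.le
    _ ≤ ∑ x ∈ s, f x := sum_le_sum_of_subset_of_nonneg (filter_subset _ _) fun x hx _ => hf x hx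

lemma card_filter_exists_le_two_mul (s : Finset α) (P : ℕ → α → Prop) {c : ℝ}
    (h : ∀ t, #{x ∈ s | P t x} ≤ c * (1 / 2) ^ t) : #{x ∈ s | ∃ t, P t x} ≤ 2 * c := by
  set bad := {x ∈ s | ∃ t, P t x}
  have hc : 0 ≤ c := by simpa using (Nat.cast_nonneg _).trans (h 0)
  choose! f hf using fun x (hx : x ∈ bad) => (mem_filter.1 hx).2
  set T := bad.sup f + 1
  have hcover : bad ⊆ (range T).biUnion fun t => {x ∈ s | P t x} := fun x hx =>
    mem_biUnion.2 ⟨f x, mem_range.2 (Nat.lt_succ_of_le (le_sup hx)),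
      mem_filter.2 ⟨(mem_filter.1 hx).1, hf x hx⟩⟩
  calc (#bad : ℝ) ≤ ∑ t ∈ range T, (#{x ∈ s | P t x} : ℝ) := by
        exact_mod_cast (card_le_card hcover).trans card_biUnion_le
    _ ≤ ∑ t ∈ range T, c * (1 / 2) ^ t := sum_le_sum fun t _ => h t
    _ = c * ∑ t ∈ range T, (1 / 2) ^ t := (mul_sum _ _ _).symm
    _ ≤ c * 2 := mul_le_mul_of_nonneg_left (sum_geometric_two_le T) hc
    _ = 2 * c := mul_comm _ _

end Counting

section LocalRing

variable {ι R : Type*}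

lemma exists_eq_pow_smul_isUnit [MonoidWithZero R] {ϖ : R} (hϖ : ∀ x, ¬IsUnit x → ϖ ∣ x)
    (hnil : IsNilpotent ϖ) {w : ι → R} (hw : w ≠ 0) :
    ∃ (s : ℕ) (u : ι → R), w = ϖ ^ s • u ∧ ∃ a, IsUnit (u a) := by
  by_contra! hnonunit
  have hdvd (s : ℕ) : ∃ u : ι → R, w = ϖ ^ s • u := by
    induction s with
    | zero => exact ⟨w, by simp⟩
    | succ s ih =>
      obtain ⟨u, hu⟩ := ih
      choose y hy using fun a => hϖ _ (hnonunit s u hu a)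
      exact ⟨y, by rw [hu]; ext a; simp [hy, pow_succ, mul_assoc]⟩
  obtain ⟨m, hm⟩ := hnil
  obtain ⟨u, hu⟩ := hdvd m
  exact hw (by rw [hu, hm]; ext a; simp)

lemma card_le_two_mul_card_filter_isUnit_apply [CommRing R] [IsLocalRing R] [Fintype (ι → R)]
    [DecidablePred (IsUnit : R → Prop)] (a : ι) :
    Fintype.card (ι → R) ≤ 2 * #{v : ι → R | IsUnit (v a)} := by
  have hinj : #{v : ι → R | ¬IsUnit (v a)} ≤ #{v : ι → R | IsUnit (v a)} := by
    refine card_le_card_of_injOn (1 - ·) (fun v hv => ?_) sub_right_injective.injOn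
    simp only [coe_filter, mem_univ, true_and, Set.mem_ofPred_eq] at hv ⊢
    exact (IsLocalRing.isUnit_or_isUnit_one_sub_self (v a)).resolve_left hv
  have hsplit := card_filter_add_card_filter_not (s := univ) fun v : ι → R => IsUnit (v a)
  rw [card_univ] at hsplit
  omega

variable [CommRing R] [Fintype ι] [DecidableEq ι]

lemma exists_isUnit_mulVec_apply [IsLocalRing R] {M : Matrix ι ι R} (hM : IsUnit M.det)
    {u : ι → R} (hu : ∃ a, IsUnit (u a)) : ∃ a, IsUnit ((M *ᵥ u) a) := by
  by_contra! hnonunit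
  obtain ⟨a, ha⟩ := hu
  have hrecover : M⁻¹ *ᵥ (M *ᵥ u) = u := by
    rw [mulVec_mulVec, nonsing_inv_mul _ hM, one_mulVec]
  have hmem : (M⁻¹ *ᵥ (M *ᵥ u)) a ∈ IsLocalRing.maximalIdeal R :=
    Ideal.sum_mem _ fun c _ => Ideal.mul_mem_left _ _ (hnonunit c)
  rw [hrecover] at hmem
  exact hmem ha

lemma exists_isUnit_det_mulVec_single {a : ι} {v : ι → R} (hv : IsUnit (v a)) :
    ∃ g : Matrix ι ι R, IsUnit g.det ∧ g *ᵥ Pi.single a 1 = v := by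
  refine ⟨updateCol 1 a v, ?_, ?_⟩
  · rwa [← cramer_apply, cramer_one]
  · rw [mulVec_single_one]
    ext c
    simp

lemma exists_isUnit_det_mulVec_eq {a : ι} {v v' : ι → R} (hv : IsUnit (v a))
    (hv' : IsUnit (v' a)) : ∃ g : Matrix ι ι R, IsUnit g.det ∧ g *ᵥ v = v' := by
  obtain ⟨g, hg, rfl⟩ := exists_isUnit_det_mulVec_single hv
  obtain ⟨g', hg', rfl⟩ := exists_isUnit_det_mulVec_single hv'
  refine ⟨g' * g⁻¹, ?_, ?_⟩
  · rw [det_mul]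
    exact hg'.mul (isUnit_nonsing_inv_det _ hg)
  · rw [mulVec_mulVec, nonsing_inv_mul_cancel_right _ _ hg]

variable [Fintype R]

variable (ι R) in
/-- The finite set of invertible `ι × ι` matrices over `R`, cut out by an invertible determinant;
over `ℤ/2^mℤ` with `m ≠ 0` these are the matrices of odd determinant. -/
noncomputable def invertibleMatrices : Finset (Matrix ι ι R) := {M | IsUnit M.det}

lemma mem_invertibleMatrices {M : Matrix ι ι R} :
    M ∈ invertibleMatrices ι R ↔ IsUnit M.det := by
  simp [invertibleMatrices]

lemma card_filter_mulVec_eq_le_card {a : ι} (u : ι → R) {v v' : ι → R} (hv : IsUnit (v a))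
    (hv' : IsUnit (v' a)) :
    #{M ∈ invertibleMatrices ι R | M *ᵥ u = v} ≤
      #{M ∈ invertibleMatrices ι R | M *ᵥ u = v'} := by
  obtain ⟨g, hg, rfl⟩ := exists_isUnit_det_mulVec_eq hv hv'
  refine card_le_card_of_injOn (g * ·) (fun M hM => ?_) fun M _ M' _ h => ?_
  · simp only [coe_filter, mem_invertibleMatrices, Set.mem_ofPred_eq] at hM ⊢
    exact ⟨by rw [det_mul]; exact hg.mul hM.1, by rw [← mulVec_mulVec, hM.2]⟩
  · exact ((isUnit_iff_isUnit_det g).2 hg).mul_left_cancel h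

lemma card_isUnit_apply_mul_card_filter_mulVec_eq_le {a : ι} (u : ι → R) {v : ι → R}
    (hv : IsUnit (v a)) :
    #{v' : ι → R | IsUnit (v' a)} * #{M ∈ invertibleMatrices ι R | M *ᵥ u = v} ≤
      #(invertibleMatrices ι R) := by
  set G := invertibleMatrices ι R
  calc #{v' : ι → R | IsUnit (v' a)} * #{M ∈ G | M *ᵥ u = v}
      = ∑ v' : ι → R with IsUnit (v' a), #{M ∈ G | M *ᵥ u = v} := by rw [sum_const, smul_eq_mul]
    _ ≤ ∑ v' : ι → R with IsUnit (v' a), #{M ∈ G | M *ᵥ u = v'} := sum_le_sum fun v' hv' =>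
        card_filter_mulVec_eq_le_card u hv (mem_filter.1 hv').2
    _ ≤ ∑ v', #{M ∈ G | M *ᵥ u = v'} := sum_le_sum_of_subset (subset_univ _)
    _ = #G := (card_eq_sum_card_fiberwise fun _ _ => mem_coe.2 (mem_univ _)).symm

variable [IsLocalRing R]

lemma card_mul_card_filter_mulVec_eq_le (u : ι → R) {v : ι → R} (hv : ∃ a, IsUnit (v a)) :
    Fintype.card (ι → R) * #{M ∈ invertibleMatrices ι R | M *ᵥ u = v} ≤
      2 * #(invertibleMatrices ι R) := by
  obtain ⟨a, ha⟩ := hv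
  calc Fintype.card (ι → R) * #{M ∈ invertibleMatrices ι R | M *ᵥ u = v}
      ≤ 2 * #{v' : ι → R | IsUnit (v' a)} * #{M ∈ invertibleMatrices ι R | M *ᵥ u = v} :=
        Nat.mul_le_mul_right _ (card_le_two_mul_card_filter_isUnit_apply a)
    _ = 2 * (#{v' : ι → R | IsUnit (v' a)} * #{M ∈ invertibleMatrices ι R | M *ᵥ u = v}) :=
        mul_assoc _ _ _
    _ ≤ 2 * #(invertibleMatrices ι R) :=
        Nat.mul_le_mul_left _ (card_isUnit_apply_mul_card_filter_mulVec_eq_le u ha)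

lemma card_mul_card_filter_mulVec_mem_le {u : ι → R} (hu : ∃ a, IsUnit (u a))
    (V : Finset (ι → R)) :
    Fintype.card (ι → R) * #{M ∈ invertibleMatrices ι R | M *ᵥ u ∈ V} ≤
      2 * #V * #(invertibleMatrices ι R) := by
  set G := invertibleMatrices ι R
  have hfiber (v : ι → R) : Fintype.card (ι → R) * #{M ∈ G | M *ᵥ u = v} ≤ 2 * #G := by
    by_cases hv : ∃ a, IsUnit (v a)
    · exact card_mul_card_filter_mulVec_eq_le u hv
    · have hempty : #{M ∈ G | M *ᵥ u = v} = 0 := by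
        rw [card_filter_eq_zero_iff]
        rintro M hM rfl
        exact hv (exists_isUnit_mulVec_apply (mem_invertibleMatrices.1 hM) hu)
      simp [hempty]
  have hcover : {M ∈ G | M *ᵥ u ∈ V} ⊆ V.biUnion fun v => {M ∈ G | M *ᵥ u = v} := fun M hM =>
    mem_biUnion.2 ⟨M *ᵥ u, (mem_filter.1 hM).2, mem_filter.2 ⟨(mem_filter.1 hM).1, rfl⟩⟩
  calc Fintype.card (ι → R) * #{M ∈ G | M *ᵥ u ∈ V}
      ≤ Fintype.card (ι → R) * ∑ v ∈ V, #{M ∈ G | M *ᵥ u = v} :=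
        Nat.mul_le_mul_left _ ((card_le_card hcover).trans card_biUnion_le)
    _ = ∑ v ∈ V, Fintype.card (ι → R) * #{M ∈ G | M *ᵥ u = v} := mul_sum _ _ _
    _ ≤ #V * (2 * #G) := sum_le_card_nsmul _ _ _ fun v _ => hfiber v
    _ = 2 * #V * #G := by ring

end LocalRing

section ZModPrimePow

variable {p m : ℕ}

lemma isUnit_zmod_primePow_iff (hp : p.Prime) (hm : m ≠ 0) (x : ZMod (p ^ m)) :
    IsUnit x ↔ ¬p ∣ x.val := by
  have : NeZero (p ^ m) := ⟨pow_ne_zero m hp.ne_zero⟩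
  rw [← ZMod.natCast_zmod_val x, ZMod.isUnit_iff_coprime, ZMod.natCast_zmod_val,
    Nat.coprime_pow_right_iff (Nat.pos_of_ne_zero hm), Nat.coprime_comm, hp.coprime_iff_not_dvd]

lemma dvd_of_not_isUnit_zmod_primePow (hp : p.Prime) (hm : m ≠ 0) {x : ZMod (p ^ m)}
    (hx : ¬IsUnit x) : (p : ZMod (p ^ m)) ∣ x := by
  have : NeZero (p ^ m) := ⟨pow_ne_zero m hp.ne_zero⟩
  rw [isUnit_zmod_primePow_iff hp hm, not_not] at hx
  rw [← ZMod.natCast_zmod_val x]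
  exact Nat.cast_dvd_cast hx

lemma isLocalRing_zmod_primePow (hp : p.Prime) (hm : m ≠ 0) : IsLocalRing (ZMod (p ^ m)) := by
  have : Fact (1 < p ^ m) := ⟨Nat.one_lt_pow hm hp.one_lt⟩
  have hp_nonunit : ¬IsUnit (p : ZMod (p ^ m)) := by
    rw [ZMod.isUnit_prime_iff_not_dvd hp, not_not]
    exact dvd_pow_self p hm
  refine IsLocalRing.of_nonunits_add fun x y hx hy hxy => hp_nonunit (isUnit_of_dvd_unit ?_ hxy)
  exact dvd_add (dvd_of_not_isUnit_zmod_primePow hp hm hx)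
    (dvd_of_not_isUnit_zmod_primePow hp hm hy)

lemma odd_val_iff_isUnit (hm : m ≠ 0) (x : ZMod (2 ^ m)) : Odd x.val ↔ IsUnit x := by
  rw [isUnit_zmod_primePow_iff Nat.prime_two hm, ← even_iff_two_dvd, Nat.not_even_iff_odd]

end ZModPrimePow

section CircularNorm

variable {n : ℕ}

lemma circAbs_natCast_le (k : ℕ) : circAbs n k ≤ k :=
  (min_le_left _ _).trans (ZMod.val_natCast n k ▸ Nat.mod_le _ _)

lemma linf_le_iff {d : ℕ} {v : Fin d → ZMod n} {R : ℕ} :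
    linf v ≤ R ↔ ∀ s, circAbs n (v s) ≤ R := by
  simp [linf]

lemma natCast_dvd_valMinAbs_nsmul {g : ℕ} (hg : g ∣ n) (x : ZMod n) :
    (g : ℤ) ∣ (g • x).valMinAbs := by
  have hcong : (n : ℤ) ∣ (g • x).valMinAbs - g * x.valMinAbs := by
    rw [← ZMod.intCast_zmod_eq_zero_iff_dvd]
    simp
  exact (dvd_sub_left (dvd_mul_right _ _)).1 ((Int.natCast_dvd_natCast.2 hg).trans hcong)

variable [NeZero n]

lemma circAbs_eq_natAbs_valMinAbs (x : ZMod n) : circAbs n x = x.valMinAbs.natAbs :=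
  (ZMod.valMinAbs_natAbs_eq_min x).symm

lemma circAbs_add_le (x y : ZMod n) : circAbs n (x + y) ≤ circAbs n x + circAbs n y := by
  simp only [circAbs_eq_natAbs_valMinAbs]
  exact (ZMod.natAbs_valMinAbs_add_le x y).trans (Int.natAbs_add_le _ _)

lemma linf_add_le {d : ℕ} (v w : Fin d → ZMod n) : linf (v + w) ≤ linf v + linf w :=
  linf_le_iff.2 fun s => (circAbs_add_le _ _).trans
    (add_le_add (linf_le_iff.1 le_rfl s) (linf_le_iff.1 le_rfl s))

lemma le_circAbs_nsmul {g : ℕ} (hg : g ∣ n) {x : ZMod n} (hx : g • x ≠ 0) :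
    g ≤ circAbs n (g • x) := by
  rw [circAbs_eq_natAbs_valMinAbs]
  refine Nat.le_of_dvd ?_ (Int.natCast_dvd.1 (natCast_dvd_valMinAbs_nsmul hg x))
  simpa [Nat.pos_iff_ne_zero] using hx

lemma card_image_nsmul_filter_circAbs_le {g : ℕ} (hg : g ∣ n) (R : ℕ) :
    #(({x | circAbs n (g • x) ≤ R} : Finset (ZMod n)).image (g • ·)) ≤ 2 * (R / g) + 1 := by
  have hg_pos : 0 < g := Nat.pos_of_dvd_of_pos hg (NeZero.pos n)
  set Q : ℤ := ((R / g : ℕ) : ℤ)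
  have hsub : ({x | circAbs n (g • x) ≤ R} : Finset (ZMod n)).image (g • ·) ⊆
      (Icc (-Q) Q).image fun z => ((g * z : ℤ) : ZMod n) := by
    simp only [subset_iff, mem_image, mem_filter, mem_univ, true_and, mem_Icc]
    rintro _ ⟨x, hx, rfl⟩
    obtain ⟨z, hz⟩ := natCast_dvd_valMinAbs_nsmul hg x
    have hzQ : z.natAbs ≤ R / g := by
      rw [circAbs_eq_natAbs_valMinAbs, hz, Int.natAbs_mul, Int.natAbs_natCast] at hx
      rwa [Nat.le_div_iff_mul_le hg_pos, mul_comm]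
    exact ⟨z, by omega, by rw [← hz, ZMod.coe_valMinAbs]⟩
  calc _ ≤ #(Icc (-Q) Q) := (card_le_card hsub).trans card_image_le
    _ = 2 * (R / g) + 1 := by rw [Int.card_Icc]; omega

lemma card_filter_nsmul_eq_le {A : Type*} [AddCommGroup A] [Fintype A] [DecidableEq A]
    [IsAddCyclic A] {g : ℕ} (hg : 0 < g) (y : A) : #{x : A | g • x = y} ≤ g := by
  obtain hempty | ⟨x₀, hx₀⟩ := ({x : A | g • x = y} : Finset A).eq_empty_or_nonempty
  · simp [hempty]
  · refine le_trans (card_le_card_of_injOn (· - x₀) (fun x hx => ?_) sub_left_injective.injOn)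
      (IsAddCyclic.card_nsmul_eq_zero_le hg)
    simp only [coe_filter, mem_filter, mem_univ, true_and, Set.mem_ofPred_eq] at hx hx₀ ⊢
    rw [nsmul_sub, hx, hx₀, sub_self]

lemma card_filter_circAbs_nsmul_le {g R : ℕ} (hg : g ∣ n) (hgR : g ≤ R) :
    #{x : ZMod n | circAbs n (g • x) ≤ R} ≤ 3 * R := by
  have hg_pos : 0 < g := Nat.pos_of_dvd_of_pos hg (NeZero.pos n)
  have hfiber (y : ZMod n) :
      #{x ∈ ({x | circAbs n (g • x) ≤ R} : Finset (ZMod n)) | g • x = y} ≤ g :=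
    (card_le_card (filter_subset_filter _ (subset_univ _))).trans (card_filter_nsmul_eq_le hg_pos y)
  calc #{x : ZMod n | circAbs n (g • x) ≤ R}
      ≤ g * #(({x | circAbs n (g • x) ≤ R} : Finset (ZMod n)).image (g • ·)) :=
        card_le_mul_card_image _ g fun y _ => hfiber y
    _ ≤ g * (2 * (R / g) + 1) := Nat.mul_le_mul_left g (card_image_nsmul_filter_circAbs_le hg R)
    _ = 2 * (g * (R / g)) + g := by ring
    _ ≤ 3 * R := by linarith [Nat.mul_div_le R g]

lemma card_filter_linf_nsmul_le {g R : ℕ} (hg : g ∣ n) (hgR : g ≤ R) (d : ℕ) :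
    #{v : Fin d → ZMod n | linf (g • v) ≤ R} ≤ (3 * R) ^ d := by
  have hpi : ({v | linf (g • v) ≤ R} : Finset (Fin d → ZMod n)) =
      Fintype.piFinset fun _ => {x : ZMod n | circAbs n (g • x) ≤ R} := by
    ext v
    simp [linf_le_iff, Fintype.mem_piFinset]
  rw [hpi, Fintype.card_piFinset_const]
  exact Nat.pow_le_pow_left (card_filter_circAbs_nsmul_le hg hgR) d

end CircularNorm

section RandomMatrix

variable {n d : ℕ} [NeZero n]

lemma pow_mul_card_filter_linf_mulVec_le (hn : IsPrimePow n) {w : Fin d → ZMod n} (hw : w ≠ 0)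
    (R : ℕ) :
    n ^ d * #{M ∈ invertibleMatrices (Fin d) (ZMod n) | linf (M *ᵥ w) ≤ R} ≤
      2 * (3 * R) ^ d * #(invertibleMatrices (Fin d) (ZMod n)) := by
  obtain ⟨p, m, hp, hm, rfl⟩ := (isPrimePow_nat_iff n).1 hn
  have := isLocalRing_zmod_primePow hp hm.ne'
  have hnil : (p : ZMod (p ^ m)) ^ m = 0 := by rw [← Nat.cast_pow, ZMod.natCast_self]
  obtain ⟨s, u, hwu, hu⟩ := exists_eq_pow_smul_isUnit
    (fun _ => dvd_of_not_isUnit_zmod_primePow hp hm.ne') ⟨m, hnil⟩ hw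
  have hps : (p : ZMod (p ^ m)) ^ s ≠ 0 := fun h => hw (by rw [hwu, h, zero_smul])
  have hdvd : p ^ s ∣ p ^ m :=
    pow_dvd_pow p (not_lt.1 fun hms => hps (pow_eq_zero_of_le hms.le hnil))
  rw [← Nat.cast_pow] at hwu hps
  have hmulVec (M : Matrix (Fin d) (Fin d) (ZMod (p ^ m))) : M *ᵥ w = p ^ s • M *ᵥ u := by
    rw [hwu, Nat.cast_smul_eq_nsmul, mulVec_smul]
  simp only [hmulVec]
  by_cases hR : p ^ s ≤ R
  · have hmem := card_mul_card_filter_mulVec_mem_le hu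
      ({v | linf (p ^ s • v) ≤ R} : Finset (Fin d → ZMod (p ^ m)))
    simp only [mem_filter, mem_univ, true_and, Fintype.card_fun, ZMod.card, Fintype.card_fin]
      at hmem
    refine hmem.trans ?_
    gcongr
    exact card_filter_linf_nsmul_le hdvd hR d
  · have hempty : #{M ∈ invertibleMatrices (Fin d) (ZMod (p ^ m)) |
        linf (p ^ s • M *ᵥ u) ≤ R} = 0 := by
      rw [card_filter_eq_zero_iff]
      intro M hM hle
      obtain ⟨a, ha⟩ := exists_isUnit_mulVec_apply (mem_invertibleMatrices.1 hM) hu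
      refine hR ((le_circAbs_nsmul hdvd ?_).trans (linf_le_iff.1 hle a))
      rwa [nsmul_eq_mul, Ne, ha.mul_left_eq_zero]
    rw [hempty, mul_zero]
    exact Nat.zero_le _

lemma pow_mul_sum_card_filter_linf_mulVec_sub_le (hn : IsPrimePow n)
    {T : Finset (Fin d → ZMod n)} {i : Fin d → ZMod n} (hi : i ∉ T) (R : ℕ) :
    n ^ d * ∑ M ∈ invertibleMatrices (Fin d) (ZMod n), #{j ∈ T | linf (M *ᵥ (i - j)) ≤ R} ≤
      #T * (2 * (3 * R) ^ d * #(invertibleMatrices (Fin d) (ZMod n))) := by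
  have hswap := sum_card_bipartiteAbove_eq_sum_card_bipartiteBelow
    (s := invertibleMatrices (Fin d) (ZMod n)) (t := T) fun M j => linf (M *ᵥ (i - j)) ≤ R
  simp only [bipartiteAbove, bipartiteBelow] at hswap
  rw [hswap, mul_sum]
  refine sum_le_card_nsmul _ _ _ fun j hj => ?_
  exact pow_mul_card_filter_linf_mulVec_le hn (sub_ne_zero.2 (ne_of_mem_of_not_mem hj hi).symm) R

end RandomMatrix

section Isolation

variable {n d : ℕ} [NeZero n]

/-- The points of `π(S ∖ {i})` in the ball of radius `(n/b)·2^t` around the bucket of `i`, where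
`π = π_{M,q}`: the points whose number decides whether `i` is isolated at scale `t`. -/
noncomputable def bucketNeighbours (b : ℕ) (S : Finset (Fin d → ZMod n))
    (M : Matrix (Fin d) (Fin d) (ZMod n)) (q i : Fin d → ZMod n) (t : ℕ) :
    Finset (Fin d → ZMod n) :=
  (S.erase i).image (fun j => fperm M q j) ∩
    ballInf (bucketPt (n / b) (fperm M q i)) ((n : ℝ) / b * 2 ^ t)

/-- The number `(2π)^{-Fd}·α^{d/2}·2^{(t+1)d}·2^t` of bucket neighbours that isolation tolerates
at scale `t`. -/
noncomputable def isolationThreshold (d F : ℕ) (α : ℝ) (t : ℕ) : ℝ :=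
  ((2 * Real.pi) ^ (F * d))⁻¹ * α ^ ((d : ℝ) / 2) * 2 ^ ((t + 1) * d) * 2 ^ t

lemma not_isolatedUnder_iff {b F : ℕ} {α : ℝ} {S : Finset (Fin d → ZMod n)}
    {M : Matrix (Fin d) (Fin d) (ZMod n)} {q i : Fin d → ZMod n} :
    ¬isolatedUnder b F α S M q i ↔
      ∃ t, isolationThreshold d F α t < #(bucketNeighbours b S M q i t) := by
  simp only [isolatedUnder, not_forall, not_le, isolationThreshold, bucketNeighbours]

lemma isolationThreshold_pos {α : ℝ} (hα : 0 < α) (F t : ℕ) : 0 < isolationThreshold d F α t := by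
  unfold isolationThreshold
  positivity

lemma linf_sub_bucketPt_le {c : ℕ} (hc : 0 < c) (v : Fin d → ZMod n) :
    linf (v - bucketPt c v) ≤ c := by
  refine linf_le_iff.2 fun s => ?_
  have hmod : v s - bucketPt c v s = (((v s).val % c : ℕ) : ZMod n) := by
    rw [sub_eq_iff_eq_add, bucketPt, ← Nat.cast_add, Nat.mod_add_div, ZMod.natCast_zmod_val]
  rw [Pi.sub_apply, hmod]
  exact (circAbs_natCast_le _).trans (Nat.mod_lt _ hc).le

lemma linf_mulVec_sub_le_of_linf_bucketPt_sub_le {c r : ℕ} (hc : 0 < c)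
    {M : Matrix (Fin d) (Fin d) (ZMod n)} {q i j : Fin d → ZMod n}
    (h : linf (bucketPt c (fperm M q i) - fperm M q j) ≤ r) : linf (M *ᵥ (i - j)) ≤ c + r := by
  have hsplit : M *ᵥ (i - j) = (fperm M q i - bucketPt c (fperm M q i)) +
      (bucketPt c (fperm M q i) - fperm M q j) := by
    rw [sub_add_sub_cancel, fperm, fperm, ← mulVec_sub, sub_sub_sub_cancel_right]
  rw [hsplit]
  exact (linf_add_le _ _).trans (add_le_add (linf_sub_bucketPt_le hc _) h)

lemma card_bucketNeighbours_le {b : ℕ} (hb : b ∣ n) (S : Finset (Fin d → ZMod n))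
    (M : Matrix (Fin d) (Fin d) (ZMod n)) (q i : Fin d → ZMod n) (t : ℕ) :
    #(bucketNeighbours b S M q i t) ≤
      #{j ∈ S.erase i | linf (M *ᵥ (i - j)) ≤ n / b * 2 ^ (t + 1)} := by
  have hb_pos : 0 < b := Nat.pos_of_dvd_of_pos hb (NeZero.pos n)
  have hnb : 0 < n / b := Nat.div_pos (Nat.le_of_dvd (NeZero.pos n) hb) hb_pos
  refine (card_le_card fun y hy => ?_).trans (card_image_le (f := fun j => fperm M q j))
  obtain ⟨hy_image, hy_ball⟩ := mem_inter.1 hy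
  obtain ⟨j, hj, rfl⟩ := mem_image.1 hy_image
  have hball : linf (bucketPt (n / b) (fperm M q i) - fperm M q j) ≤ n / b * 2 ^ t := by
    have hle := (mem_filter.1 hy_ball).2
    rw [← Nat.cast_div hb (by positivity)] at hle
    exact_mod_cast hle
  have hradius : n / b + n / b * 2 ^ t ≤ n / b * 2 ^ (t + 1) := by
    nlinarith [Nat.one_le_two_pow (n := t), pow_succ 2 t]
  exact mem_image_of_mem _ (mem_filter.2
    ⟨hj, (linf_mulVec_sub_le_of_linf_bucketPt_sub_le hnb hball).trans hradius⟩)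

variable (n d) in
/-- The sample space of the hashing: pairs `(Σ, q)` of an invertible matrix and a shift. -/
noncomputable def hashingSeeds :
    Finset (Matrix (Fin d) (Fin d) (ZMod n) × (Fin d → ZMod n)) :=
  invertibleMatrices (Fin d) (ZMod n) ×ˢ univ

lemma card_hashingSeeds :
    #(hashingSeeds n d) = n ^ d * #(invertibleMatrices (Fin d) (ZMod n)) := by
  simp [hashingSeeds, ZMod.card, mul_comm]

lemma hashingSeeds_nonempty : (hashingSeeds n d).Nonempty :=
  ⟨(1, 0), mem_product.2 ⟨mem_invertibleMatrices.2 (by simp), mem_univ _⟩⟩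

lemma sum_card_bucketNeighbours_le (hn : IsPrimePow n) {b : ℕ} (hb : b ∣ n)
    (S : Finset (Fin d → ZMod n)) (i : Fin d → ZMod n) (t : ℕ) :
    ∑ p ∈ hashingSeeds n d, #(bucketNeighbours b S p.1 p.2 i t) ≤
      #S * (2 * (3 * (n / b * 2 ^ (t + 1))) ^ d * #(invertibleMatrices (Fin d) (ZMod n))) := by
  set R := n / b * 2 ^ (t + 1)
  calc ∑ p ∈ hashingSeeds n d, #(bucketNeighbours b S p.1 p.2 i t)
      ≤ ∑ p ∈ hashingSeeds n d, #{j ∈ S.erase i | linf (p.1 *ᵥ (i - j)) ≤ R} :=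
        sum_le_sum fun p _ => card_bucketNeighbours_le hb S p.1 p.2 i t
    _ = n ^ d * ∑ M ∈ invertibleMatrices (Fin d) (ZMod n),
          #{j ∈ S.erase i | linf (M *ᵥ (i - j)) ≤ R} := by
        simp [hashingSeeds, sum_product, mul_sum, ZMod.card]
    _ ≤ #(S.erase i) * (2 * (3 * R) ^ d * #(invertibleMatrices (Fin d) (ZMod n))) :=
        pow_mul_sum_card_filter_linf_mulVec_sub_le hn (notMem_erase i S) R
    _ ≤ #S * (2 * (3 * R) ^ d * #(invertibleMatrices (Fin d) (ZMod n))) :=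
        Nat.mul_le_mul_right _ (card_le_card (erase_subset i S))

/- Here `r` plays the role of `√α`. The hypothesis provides the fourth power of `(2π)^{Fd}` where
one factor is needed; the other three absorb the constant `16·3^d·r^{d-1}`. -/
lemma mul_two_pi_pow_le_of_div_le {d F : ℕ} (hd : 0 < d) (hF : 0 < F) {r k B : ℝ} (hr : 0 < r)
    (hr₂ : r ≤ 2) (hk : 0 ≤ k) (hB : (2 * Real.pi) ^ (4 * F * d) * k / r ^ (2 * d) ≤ B) :
    16 * k * 3 ^ d * (2 * Real.pi) ^ (F * d) ≤ r ^ (d + 1) * B := by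
  obtain ⟨e, rfl⟩ : ∃ e, d = e + 1 := ⟨d - 1, by omega⟩
  set P : ℝ := (2 * Real.pi) ^ (F * (e + 1)) with hP
  have hP_pos : 0 < P := by positivity
  have hP_ge : (6 : ℝ) ^ (e + 1) ≤ P :=
    calc (6 : ℝ) ^ (e + 1) ≤ (2 * Real.pi) ^ (e + 1) := by
          gcongr
          linarith [Real.pi_gt_three]
      _ ≤ P := pow_le_pow_right₀ (by linarith [Real.pi_gt_three])
          (Nat.le_mul_of_pos_left _ hF)
  have hconst : 16 * 3 ^ (e + 1) * r ^ e ≤ P ^ 3 :=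
    calc 16 * 3 ^ (e + 1) * r ^ e ≤ 16 * 3 ^ (e + 1) * 2 ^ e := by gcongr
      _ = 48 * 6 ^ e := by rw [show (6 : ℝ) = 3 * 2 by norm_num, mul_pow]; ring
      _ ≤ 216 * 216 ^ e := by gcongr <;> norm_num
      _ = (6 ^ (e + 1)) ^ 3 := by rw [← pow_succ', ← pow_mul, mul_comm, pow_mul]; norm_num
      _ ≤ P ^ 3 := by gcongr
  have hB' : P ^ 4 * k ≤ B * r ^ (2 * (e + 1)) := by
    rw [div_le_iff₀ (by positivity)] at hB
    rwa [hP, ← pow_mul, show F * (e + 1) * 4 = 4 * F * (e + 1) by ring]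
  refine le_of_mul_le_mul_right ?_ (pow_pos hr e)
  calc 16 * k * 3 ^ (e + 1) * P * r ^ e = 16 * 3 ^ (e + 1) * r ^ e * (P * k) := by ring
    _ ≤ P ^ 3 * (P * k) := by gcongr
    _ = P ^ 4 * k := by ring
    _ ≤ B * r ^ (2 * (e + 1)) := hB'
    _ = r ^ (e + 1 + 1) * B * r ^ e := by ring

lemma mul_le_sqrt_mul_isolationThreshold (hd : 0 < d) {F : ℕ} (hF : 0 < F) {k α b : ℝ}
    (hk : 0 ≤ k) (hα : 0 < α) (hα₂ : √α ≤ 2)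
    (hB : (2 * Real.pi) ^ (4 * F * d) * k / α ^ d ≤ b ^ d) {c : ℝ} (hc : 0 ≤ c) (t : ℕ) :
    2 * k * (2 * (3 * (c * 2 ^ (t + 1))) ^ d) ≤
      √α / 4 * (c * b) ^ d * (1 / 2) ^ t * isolationThreshold d F α t := by
  have hα_pow : α ^ d = √α ^ (2 * d) := by rw [pow_mul, Real.sq_sqrt hα.le]
  rw [hα_pow] at hB
  have hkey := mul_two_pi_pow_le_of_div_le hd hF (Real.sqrt_pos.2 hα) hα₂ hk hB
  have hthreshold : isolationThreshold d F α t =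
      √α ^ d / (2 * Real.pi) ^ (F * d) * (2 ^ (t + 1)) ^ d * 2 ^ t := by
    rw [isolationThreshold, Real.rpow_div_two_eq_sqrt _ hα.le, Real.rpow_natCast, pow_mul]
    ring
  have hhalf : (1 / 2 : ℝ) ^ t * 2 ^ t = 1 := by rw [← mul_pow]; norm_num
  calc 2 * k * (2 * (3 * (c * 2 ^ (t + 1))) ^ d)
      = 16 * k * 3 ^ d * (c ^ d * (2 ^ (t + 1)) ^ d / 4) := by simp only [mul_pow]; ring
    _ ≤ √α ^ (d + 1) * b ^ d / (2 * Real.pi) ^ (F * d) * (c ^ d * (2 ^ (t + 1)) ^ d / 4) := by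
        gcongr
        rwa [le_div_iff₀ (by positivity)]
    _ = √α / 4 * (c * b) ^ d * (√α ^ d / (2 * Real.pi) ^ (F * d) * (2 ^ (t + 1)) ^ d) *
          ((1 / 2) ^ t * 2 ^ t) := by rw [hhalf, mul_pow]; ring
    _ = √α / 4 * (c * b) ^ d * (1 / 2) ^ t * isolationThreshold d F α t := by
        rw [hthreshold]; ring

variable {k b F : ℕ} {α : ℝ} {S : Finset (Fin d → ZMod n)}

lemma card_filter_isolationThreshold_lt_le (hn : IsPrimePow n) (hd : 0 < d) (hS : #S ≤ 2 * k)
    (hα : 0 < α) (hα₂ : √α ≤ 2) (hF : 0 < F) (hb : b ∣ n)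
    (hB : (2 * Real.pi) ^ (4 * F * d) * k / α ^ d ≤ (b : ℝ) ^ d) (i : Fin d → ZMod n) (t : ℕ) :
    #{p ∈ hashingSeeds n d | isolationThreshold d F α t < #(bucketNeighbours b S p.1 p.2 i t)} ≤
      √α / 4 * #(hashingSeeds n d) * (1 / 2) ^ t := by
  set I := #(invertibleMatrices (Fin d) (ZMod n))
  have hn_eq : ((n / b : ℕ) : ℝ) * b = n := by exact_mod_cast Nat.div_mul_cancel hb
  refine le_of_mul_le_mul_right ?_ (isolationThreshold_pos (d := d) hα F t)
  rw [← nsmul_eq_mul]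
  calc _ ≤ ∑ p ∈ hashingSeeds n d, (#(bucketNeighbours b S p.1 p.2 i t) : ℝ) :=
        card_filter_lt_nsmul_le_sum _ _ (fun _ _ => Nat.cast_nonneg _) _
    _ ≤ #S * (2 * (3 * ((n / b : ℕ) * 2 ^ (t + 1))) ^ d * I) := by
        exact_mod_cast sum_card_bucketNeighbours_le hn hb S i t
    _ ≤ (2 * k : ℕ) * (2 * (3 * ((n / b : ℕ) * 2 ^ (t + 1))) ^ d * I) := by gcongr
    _ = 2 * k * (2 * (3 * ((n / b : ℕ) * 2 ^ (t + 1))) ^ d) * I := by push_cast; ring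
    _ ≤ √α / 4 * ((n / b : ℕ) * b) ^ d * (1 / 2) ^ t * isolationThreshold d F α t * I :=
        mul_le_mul_of_nonneg_right (mul_le_sqrt_mul_isolationThreshold hd hF (Nat.cast_nonneg k)
          hα hα₂ hB (Nat.cast_nonneg _) t) (Nat.cast_nonneg _)
    _ = √α / 4 * #(hashingSeeds n d) * (1 / 2) ^ t * isolationThreshold d F α t := by
        rw [hn_eq, card_hashingSeeds]; push_cast; ring

lemma card_filter_not_isolatedUnder_le (hn : IsPrimePow n) (hd : 0 < d) (hS : #S ≤ 2 * k)
    (hα : 0 < α) (hα₂ : √α ≤ 2) (hF : 0 < F) (hb : b ∣ n)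
    (hB : (2 * Real.pi) ^ (4 * F * d) * k / α ^ d ≤ (b : ℝ) ^ d) (i : Fin d → ZMod n) :
    #{p ∈ hashingSeeds n d | ¬isolatedUnder b F α S p.1 p.2 i} ≤
      √α / 2 * #(hashingSeeds n d) := by
  simp only [not_isolatedUnder_iff]
  refine (card_filter_exists_le_two_mul _ _
    (card_filter_isolationThreshold_lt_le hn hd hS hα hα₂ hF hb hB i)).trans_eq ?_
  ring

end Isolation

theorem stmt3_general {n d k b F : ℕ} [NeZero n] {α : ℝ} {S : Finset (Fin d → ZMod n)}
    (hn : IsPrimePow n) (hd : 0 < d) (hS : #S ≤ 2 * k) (hα : 0 < α) (hF : 0 < F) (hb : b ∣ n)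
    (hB : (2 * Real.pi) ^ (4 * F * d) * k / α ^ d ≤ (b : ℝ) ^ d) (i : Fin d → ZMod n) :
    1 - √α / 2 ≤
      (#{p : Matrix (Fin d) (Fin d) (ZMod n) × (Fin d → ZMod n) |
          IsUnit p.1.det ∧ isolatedUnder b F α S p.1 p.2 i} : ℝ) /
        #{p : Matrix (Fin d) (Fin d) (ZMod n) × (Fin d → ZMod n) | IsUnit p.1.det} := by
  have hseeds : ({p | IsUnit p.1.det} : Finset (Matrix (Fin d) (Fin d) (ZMod n) × _)) =
      hashingSeeds n d := by
    ext p
    simp [hashingSeeds, mem_invertibleMatrices]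
  rw [← filter_filter, hseeds]
  obtain hα₂ | hα₂ := le_total (√α) 2
  · have hseeds_pos : (0 : ℝ) < #(hashingSeeds n d) := mod_cast hashingSeeds_nonempty.card_pos
    have hsplit : (#{p ∈ hashingSeeds n d | isolatedUnder b F α S p.1 p.2 i} : ℝ) +
        #{p ∈ hashingSeeds n d | ¬isolatedUnder b F α S p.1 p.2 i} = #(hashingSeeds n d) :=
      mod_cast card_filter_add_card_filter_not _
    rw [le_div_iff₀ hseeds_pos]
    linarith [card_filter_not_isolatedUnder_le hn hd hS hα hα₂ hF hb hB i]
  · exact le_trans (b := 0) (by linarith) (by positivity)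

lemma one_lt_of_two_pi_pow_mul_div_le {e d k b : ℕ} {α : ℝ} (hd : d ≠ 0) (hk : 1 ≤ k)
    (hα : 0 < α) (hα₁ : α < 1) (hB : (2 * Real.pi) ^ e * k / α ^ d ≤ (b : ℝ) ^ d) : 1 < b := by
  by_contra! hb
  have hk' : (1 : ℝ) ≤ k := mod_cast hk
  have hpi : (1 : ℝ) ≤ (2 * Real.pi) ^ e := one_le_pow₀ (by linarith [Real.pi_gt_three])
  have hb' : (b : ℝ) ^ d ≤ 1 := pow_le_one₀ (Nat.cast_nonneg b) (mod_cast hb)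
  rw [div_le_iff₀ (by positivity)] at hB
  nlinarith [pow_lt_one₀ hα.le hα₁ hd, pow_pos hα d]

theorem stmt3 :
    ∃ α₀ ∈ Set.Ioo (0 : ℝ) 1,
      ∀ (n : ℕ) [NeZero n] (d m k b mb F : ℕ) (α : ℝ)
        (S : Finset (Fin d → ZMod n)) (i : Fin d → ZMod n),
        n = 2 ^ m → 1 ≤ d → 1 ≤ k → S.card ≤ 2 * k →
        α ∈ Set.Ioo 0 α₀ → 2 * d ≤ F → b = 2 ^ mb → b ∣ n →
        (2 * Real.pi) ^ (4 * F * d) * k / α ^ d ≤ (b : ℝ) ^ d →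
        1 - Real.sqrt α / 2 ≤
          ((univ.filter
              (fun p : Matrix (Fin d) (Fin d) (ZMod n) × (Fin d → ZMod n) =>
                Odd (Matrix.det p.1).val ∧ isolatedUnder b F α S p.1 p.2 i)).card : ℝ)
          / ((univ.filter
              (fun p : Matrix (Fin d) (Fin d) (ZMod n) × (Fin d → ZMod n) =>
                Odd (Matrix.det p.1).val)).card : ℝ) := by
  refine ⟨1 / 2, by norm_num, ?_⟩
  rintro n _ d m k b mb F α S i rfl hd hk hS ⟨hα₀, hα₁⟩ hF - hb hB
  have hb_gt : 1 < b := one_lt_of_two_pi_pow_mul_div_le (by omega) hk hα₀ (by linarith) hB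
  have hm : m ≠ 0 := by
    rintro rfl
    exact hb_gt.ne' (Nat.dvd_one.1 hb)
  simp only [odd_val_iff_isUnit hm]
  exact stmt3_general (Nat.prime_two.isPrimePow.pow hm) hd hS hα₀ (by omega) hb hB i
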